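/- The infimum of v(G,w) over all instances (G,w) of the concurrent graph sharing game equals 1/3. -/

import Mathlib

/-!
Formalization of the concurrent graph sharing game.

An instance is a finite connected simple graph `G` on a finite vertex type `V`
together with vertex weights `w : V → (0,1]` summing to `1`, such that no two
distinct subsets of vertices have the same total weight.

A game history is recorded as a list of the taken vertices, **most recent
first**.  The player-to-move at a history is determined by the history itself:
the first player (1st) moves when his collected weight so far is at most that
of the second player (2nd); by the distinct-subset-sums assumption a tie occurs
only at the empty history, where indeed 1st begins.  `scores w h` computes the
pair `(w(F), w(S))` of total weights collected by 1st and 2nd along a history.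

A strategy is a function from histories to the chosen next vertex; it is legal
if, whenever some legal move exists (a non-taken vertex that is adjacent to a
taken one, or any vertex at the very beginning), it produces a legal move.
`firstScore w σ τ` is the total weight collected by 1st after the complete play
(all `Fintype.card V` vertices taken) in which 1st uses `σ` and 2nd uses `τ`.

`FirstGuarantees G w c` says that 1st has a legal strategy guaranteeing that he
collects total weight at least `c` against every legal strategy of 2nd, and the
value `gameValue G w` is the supremum of all such guarantees `c`.
-/

namespace ConcurrentSharing

variable {V : Type} [Fintype V]

/-- The pair `(w(F), w(S))` of weights collected by the two players along a
history (most recent vertex first): each vertex is assigned to the player who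
was to move, namely 1st iff his score so far is at most 2nd's score. -/
noncomputable def scores (w : V → ℝ) : List V → ℝ × ℝ
  | [] => (0, 0)
  | v :: h =>
    let p := scores w h
    if p.1 ≤ p.2 then (p.1 + w v, p.2) else (p.1, p.2 + w v)

/-- `v` is a legal next move at history `h`: it is not yet taken, and it is
adjacent to some taken vertex (any vertex is legal at the start). -/
def LegalMove (G : SimpleGraph V) (h : List V) (v : V) : Prop :=
  v ∉ h ∧ (h = [] ∨ ∃ u ∈ h, G.Adj u v)

/-- A strategy (for either player) maps histories to vertices; it is legal if
it produces a legal move whenever a legal move exists. -/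
def LegalStrategy (G : SimpleGraph V) (σ : List V → V) : Prop :=
  ∀ h : List V, (∃ v, LegalMove G h v) → LegalMove G h (σ h)

/-- The history after `n` rounds when 1st plays `σ` and 2nd plays `τ`
(the player to move is the one whose collected weight so far is smaller;
at the start, i.e. on a tie, 1st moves). -/
noncomputable def playAux (w : V → ℝ) (σ τ : List V → V) : ℕ → List V
  | 0 => []
  | n + 1 =>
    let h := playAux w σ τ n
    (if (scores w h).1 ≤ (scores w h).2 then σ h else τ h) :: h

/-- The total weight `w(F)` collected by 1st at the end of the complete play
(all vertices taken) in which 1st plays `σ` and 2nd plays `τ`. -/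
noncomputable def firstScore (w : V → ℝ) (σ τ : List V → V) : ℝ :=
  (scores w (playAux w σ τ (Fintype.card V))).1

/-- 1st has a legal strategy collecting total weight at least `c` against
every legal strategy of 2nd. -/
def FirstGuarantees (G : SimpleGraph V) (w : V → ℝ) (c : ℝ) : Prop :=
  ∃ σ : List V → V, LegalStrategy G σ ∧
    ∀ τ : List V → V, LegalStrategy G τ → c ≤ firstScore w σ τ

/-- The value `v(G,w)`: the maximum total weight 1st can guarantee. -/
noncomputable def gameValue (G : SimpleGraph V) (w : V → ℝ) : ℝ :=
  sSup {c : ℝ | FirstGuarantees G w c}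

/-- `(G, w)` is an instance of the concurrent graph sharing game: `G` is
connected, the weights lie in `(0,1]` and sum to `1`, and no two distinct
subsets of vertices have the same total weight. -/
def IsGameInstance (G : SimpleGraph V) (w : V → ℝ) : Prop :=
  G.Connected ∧ (∀ v : V, 0 < w v ∧ w v ≤ 1) ∧ (∑ v : V, w v) = 1 ∧
    ∀ A B : Finset V, A ≠ B → ∑ a ∈ A, w a ≠ ∑ b ∈ B, w b

end ConcurrentSharing

namespace ConcurrentSharing

variable {V : Type} [Fintype V]

lemma exists_legalMove {G : SimpleGraph V} (hG : G.Connected) (h : List V)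
    (hl : h.length < Fintype.card V) : ∃ v, LegalMove G h v := by
  classical
  have hex : ∃ u, u ∉ h := by
    by_contra hc
    push Not at hc
    have h1 : (Finset.univ : Finset V) ⊆ h.toFinset := fun x _ => by simpa using hc x
    have h2 := Finset.card_le_card h1
    have h3 := h.toFinset_card_le
    rw [Finset.card_univ] at h2
    omega
  obtain ⟨u, hu⟩ := hex
  cases h with
  | nil => exact ⟨u, hu, Or.inl rfl⟩
  | cons a t =>
    obtain ⟨p⟩ := hG.preconnected a u
    obtain ⟨d, _, hd1, hd2⟩ := p.exists_boundary_dart {x | x ∈ a :: t} (by simp) hu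
    exact ⟨d.snd, hd2, Or.inr ⟨d.fst, hd1, d.adj⟩⟩

lemma playAux_length (w : V → ℝ) (σ τ : List V → V) (n : ℕ) :
    (playAux w σ τ n).length = n := by
  induction n with
  | zero => rfl
  | succ n ih => simp [playAux, ih]

lemma playAux_nodup {G : SimpleGraph V} (hG : G.Connected) (w : V → ℝ) {σ τ : List V → V}
    (hσ : LegalStrategy G σ) (hτ : LegalStrategy G τ) (n : ℕ) (hn : n ≤ Fintype.card V) :
    (playAux w σ τ n).Nodup := by
  induction n with
  | zero => simp [playAux]
  | succ n ih =>
    have hex := exists_legalMove hG (playAux w σ τ n) (by rw [playAux_length]; omega)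
    simp only [playAux, List.nodup_cons]
    refine ⟨?_, ih (by omega)⟩
    split_ifs
    · exact (hσ _ hex).1
    · exact (hτ _ hex).1

lemma scores_sum (w : V → ℝ) (h : List V) :
    (scores w h).1 + (scores w h).2 = (h.map w).sum := by
  induction h with
  | nil => simp [scores]
  | cons v h ih =>
    simp only [scores, List.map_cons, List.sum_cons, ← ih]
    split_ifs <;> ring

lemma scores_nonneg (w : V → ℝ) (hw : ∀ v, 0 < w v) (h : List V) :
    0 ≤ (scores w h).1 ∧ 0 ≤ (scores w h).2 := by
  induction h with
  | nil => simp [scores]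
  | cons v h ih =>
    have := hw v
    simp only [scores]
    split_ifs
    · exact ⟨by linarith [ih.1], ih.2⟩
    · exact ⟨ih.1, by linarith [ih.2]⟩

lemma scores_diff (w : V → ℝ) (hw : ∀ v, 0 < w v) (M : ℝ) (hM0 : 0 ≤ M) (hM : ∀ v, w v ≤ M)
    (h : List V) : (scores w h).2 - (scores w h).1 ≤ M := by
  induction h with
  | nil => simpa [scores] using hM0
  | cons v h ih =>
    have := hw v
    have := hM v
    simp only [scores]
    split_ifs with hc
    · simp only; linarith
    · simp only; linarith

lemma final_sum {G : SimpleGraph V} (hG : G.Connected) (w : V → ℝ) {σ τ : List V → V}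
    (hσ : LegalStrategy G σ) (hτ : LegalStrategy G τ) :
    (scores w (playAux w σ τ (Fintype.card V))).1
      + (scores w (playAux w σ τ (Fintype.card V))).2 = ∑ v, w v := by
  classical
  rw [scores_sum]
  have hnd := playAux_nodup hG w hσ hτ _ le_rfl
  have hlen := playAux_length w σ τ (Fintype.card V)
  rw [← List.sum_toFinset w hnd]
  congr 1
  rw [← Finset.card_eq_iff_eq_univ, List.toFinset_card_of_nodup hnd, hlen]

lemma first_ge_start (w : V → ℝ) (hw : ∀ v, 0 < w v) (σ τ : List V → V) (n : ℕ) :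
    w (σ []) ≤ (scores w (playAux w σ τ (n + 1))).1 := by
  induction n with
  | zero => simp [playAux, scores]
  | succ n ih =>
    rw [playAux]
    simp only [scores]
    split_ifs
    · simp only
      linarith [hw (σ (playAux w σ τ (n + 1)))]
    · exact ih

open Classical in
/-- The strategy that starts at `v` and later makes moves preferring those satisfying `P`. -/
noncomputable def prefStrategy (G : SimpleGraph V) (v : V) (P : List V → Prop) : List V → V :=
  fun h =>
    if hP : ∃ u, LegalMove G h u ∧ P (u :: h) then hP.choose
    else if h = [] then v
    else if hl : ∃ u, LegalMove G h u then hl.choose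
    else v

lemma prefStrategy_legal (G : SimpleGraph V) (v : V) (P : List V → Prop) :
    LegalStrategy G (prefStrategy G v P) := by
  intro h hex
  unfold prefStrategy
  split_ifs with h1 h2
  · exact h1.choose_spec.1
  · subst h2
    exact ⟨by simp, Or.inl rfl⟩
  · exact hex.choose_spec

lemma prefStrategy_spec (G : SimpleGraph V) (v : V) (P : List V → Prop) (h : List V)
    (hP : ∃ u, LegalMove G h u ∧ P (u :: h)) : P (prefStrategy G v P h :: h) := by
  unfold prefStrategy
  rw [dif_pos hP]
  exact hP.choose_spec.2

lemma one_third_le_gameValue {G : SimpleGraph V} {w : V → ℝ} (hI : IsGameInstance G w) :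
    1 / 3 ≤ gameValue G w := by
  obtain ⟨hG, hw, hs, -⟩ := hI
  have hw0 : ∀ v, 0 < w v := fun v => (hw v).1
  have := hG.nonempty
  obtain ⟨v, hv⟩ := Finite.exists_max w
  apply le_csSup
  · refine ⟨1, ?_⟩
    rintro c ⟨σ, hσ, hc⟩
    have h1 := hc σ hσ
    have h2 := final_sum hG w hσ hσ
    have h3 := (scores_nonneg w hw0 (playAux w σ σ (Fintype.card V))).2
    unfold firstScore at h1
    linarith
  · refine ⟨prefStrategy G v (fun _ => False), prefStrategy_legal _ _ _, ?_⟩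
    intro τ hτ
    have hσ := prefStrategy_legal G v (fun _ => False)
    have h0 : prefStrategy G v (fun _ => False) [] = v := by simp [prefStrategy]
    generalize prefStrategy G v (fun _ => False) = σ at *
    have h2 := final_sum hG w hσ hτ
    have h3 := scores_diff w hw0 (w v) (hw0 v).le hv (playAux w σ τ (Fintype.card V))
    have h4 : w v ≤ (scores w (playAux w σ τ (Fintype.card V))).1 := by
      obtain ⟨n, hn⟩ := Nat.exists_eq_succ_of_ne_zero (Fintype.card_ne_zero (α := V))
      rw [hn, ← h0]
      exact first_ge_start w hw0 σ τ n
    unfold firstScore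
    linarith

/-! The extremal family: a cycle on seven vertices, three of which are heavy. -/

/-- Number of heavy units of the `i`-th vertex. -/
def hv (i : Fin 7) : ℕ := if i = 0 ∨ i = 1 ∨ i = 3 then 1 else 0

/-- Light part of the weight of the `i`-th vertex. -/
def lt (i : Fin 7) : ℕ := (![3, 0, 4, 5, 2, 1, 3] : Fin 7 → ℕ) i * 1024 + 2 ^ i.val

/-- Score bookkeeping: heavy and light units of both players, the `Bool`
tells whether 1st is to move. -/
structure St where
  a : ℕ
  b : ℕ
  c : ℕ
  d : ℕ

/-- Whether the first player is to move (lexicographic comparison). -/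
def St.first (s : St) : Bool := decide (s.a < s.c) || (decide (s.a = s.c) && decide (s.b ≤ s.d))

/-- Update of the bookkeeping. -/
def St.step (s : St) (v : Fin 7) : St :=
  if s.first then ⟨s.a + hv v, s.b + lt v, s.c, s.d⟩ else ⟨s.a, s.b, s.c + hv v, s.d + lt v⟩

/-- Bookkeeping for a history. -/
def stOf : List (Fin 7) → St
  | [] => ⟨0, 0, 0, 0⟩
  | v :: h => (stOf h).step v

/-- Legality of a move on the cycle. -/
def legalB (h : List (Fin 7)) (v : Fin 7) : Bool :=
  !(h.contains v) && (h.isEmpty || h.any fun u => decide (u - v = 1) || decide (v - u = 1))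

/-- The second player can hold the first player to one heavy vertex. -/
def win : ℕ → St → List (Fin 7) → Bool
  | 0, s, _ => decide (s.a ≤ 1)
  | k + 1, s, h =>
    if s.first then (List.finRange 7).all fun v => !(legalB h v) || win k (s.step v) (v :: h)
    else (List.finRange 7).any fun v => legalB h v && win k (s.step v) (v :: h)

lemma win_start : win 7 ⟨0, 0, 0, 0⟩ [] = true := by decide +kernel

lemma lt_inj : ∀ A B : Finset (Fin 7), ∑ i ∈ A, lt i = ∑ i ∈ B, lt i → A = B := by
  have h : ∀ A : Finset (Fin 7),
      A = Finset.univ.filter (fun i : Fin 7 => (∑ j ∈ A, lt j).testBit i.val = true) := by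
    decide +kernel
  intro A B hAB
  rw [h A, h B, hAB]

lemma lt_le (v : Fin 7) : lt v ≤ 6000 := by revert v; decide
lemma lt_pos (v : Fin 7) : 0 < lt v := by revert v; decide

lemma legalB_iff (h : List (Fin 7)) (v : Fin 7) :
    legalB h v = true ↔ LegalMove (SimpleGraph.cycleGraph 7) h v := by
  simp [legalB, LegalMove, SimpleGraph.cycleGraph_adj]

/-- Unnormalised weight. -/
noncomputable def wt (K : ℕ) (i : Fin 7) : ℝ := ((hv i * K + lt i : ℕ) : ℝ)

/-- Total weight. -/
noncomputable def tot (K : ℕ) : ℝ := ∑ i, wt K i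

/-- Normalised weight. -/
noncomputable def wn (K : ℕ) (i : Fin 7) : ℝ := wt K i / tot K

lemma wt_pos (K : ℕ) (i : Fin 7) : 0 < wt K i := by
  have := lt_pos i
  unfold wt
  exact_mod_cast Nat.add_pos_right _ this

lemma tot_pos (K : ℕ) : 0 < tot K := Finset.sum_pos (fun i _ => wt_pos K i) Finset.univ_nonempty

lemma tot_ge (K : ℕ) : (3 * K : ℝ) ≤ tot K := by
  have : (3 * K : ℕ) ≤ ∑ i, (hv i * K + lt i) := by
    rw [Finset.sum_add_distrib, ← Finset.sum_mul]
    have h3 : ∑ i, hv i = 3 := by decide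
    rw [h3]
    exact Nat.le_add_right _ _
  unfold tot wt
  exact_mod_cast this

lemma lex_iff {K a b c d : ℕ} (hb : b < K) (hd : d < K) :
    (a * K + b ≤ c * K + d) ↔ (a < c ∨ (a = c ∧ b ≤ d)) := by
  rcases lt_trichotomy a c with h | h | h
  · have : (a + 1) * K ≤ c * K := Nat.mul_le_mul_right K h
    have e : (a + 1) * K = a * K + K := by ring
    constructor
    · intro _; exact Or.inl h
    · intro _; omega
  · subst h
    simp
  · have : (c + 1) * K ≤ a * K := Nat.mul_le_mul_right K h
    have e : (c + 1) * K = c * K + K := by ring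
    constructor
    · intro _; omega
    · intro _; omega

lemma stOf_le (h : List (Fin 7)) : (stOf h).b + (stOf h).d ≤ 6000 * h.length := by
  induction h with
  | nil => simp [stOf]
  | cons v h ih =>
    have := lt_le v
    simp only [stOf, St.step, List.length_cons]
    split_ifs <;> simp only <;> omega

lemma first_iff (K : ℕ) (hK : 42000 < K) (h : List (Fin 7)) (hl : h.length ≤ 7) :
    (stOf h).first = true ↔
      (stOf h).a * K + (stOf h).b ≤ (stOf h).c * K + (stOf h).d := by
  have := stOf_le h
  rw [lex_iff (by omega) (by omega)]
  simp [St.first]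

lemma scores_wn (K : ℕ) (hK : 42000 < K) (h : List (Fin 7)) (hl : h.length ≤ 7) :
    scores (wn K) h = ((((stOf h).a * K + (stOf h).b : ℕ) : ℝ) / tot K,
      (((stOf h).c * K + (stOf h).d : ℕ) : ℝ) / tot K) := by
  induction h with
  | nil => simp [scores, stOf]
  | cons v h ih =>
    have hl' : h.length ≤ 7 := by simp at hl; omega
    have hf := first_iff K hK h hl'
    have ht := tot_pos K
    simp only [scores, ih hl', stOf, St.step, div_le_div_iff_of_pos_right ht, Nat.cast_le, ← hf]
    split_ifs
    · simp only [wn, wt, Prod.mk.injEq, and_true]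
      push_cast
      ring
    · simp only [wn, wt, Prod.mk.injEq, true_and]
      push_cast
      ring

lemma wn_instance (K : ℕ) (hK : 42000 < K) :
    IsGameInstance (SimpleGraph.cycleGraph 7) (wn K) := by
  have ht := tot_pos K
  refine ⟨SimpleGraph.cycleGraph_connected, ?_, ?_, ?_⟩
  · intro v
    refine ⟨div_pos (wt_pos K v) ht, ?_⟩
    unfold wn
    rw [div_le_one ht]
    exact Finset.single_le_sum (fun i _ => (wt_pos K i).le) (Finset.mem_univ v)
  · unfold wn
    rw [← Finset.sum_div]
    exact div_self ht.ne'
  · intro A B hAB hs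
    apply hAB
    unfold wn at hs
    rw [← Finset.sum_div, ← Finset.sum_div, div_left_inj' ht.ne'] at hs
    unfold wt at hs
    have hs' : ∑ i ∈ A, (hv i * K + lt i) = ∑ i ∈ B, (hv i * K + lt i) := by exact_mod_cast hs
    rw [Finset.sum_add_distrib, Finset.sum_add_distrib, ← Finset.sum_mul, ← Finset.sum_mul] at hs'
    have hb : ∀ C : Finset (Fin 7), ∑ i ∈ C, lt i < K := by
      intro C
      have h1 : ∑ i ∈ C, lt i ≤ ∑ i, lt i :=
        Finset.sum_le_sum_of_subset (Finset.subset_univ C)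
      have h2 : ∑ i, lt i ≤ 42000 := by decide
      omega
    apply lt_inj
    have l1 := (lex_iff (hb A) (hb B)).1 hs'.le
    have l2 := (lex_iff (hb B) (hb A)).1 hs'.ge
    omega

lemma gameValue_wn_le (K : ℕ) (hK : 42000 < K) :
    gameValue (SimpleGraph.cycleGraph 7) (wn K) ≤ (K + 42000) / (3 * K) := by
  have ht := tot_pos K
  have hK0 : (0 : ℝ) < K := by exact_mod_cast (by omega : 0 < K)
  apply Real.sSup_le _ (by positivity)
  rintro c ⟨σ, hσ, hc⟩
  set G := SimpleGraph.cycleGraph 7 with hGdef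
  have hG : G.Connected := SimpleGraph.cycleGraph_connected
  let P : List (Fin 7) → Prop := fun h => win (7 - h.length) (stOf h) h = true
  set τ := prefStrategy G 0 P with hτdef
  have hτ : LegalStrategy G τ := prefStrategy_legal _ _ _
  have key : ∀ n, n ≤ 7 → P (playAux (wn K) σ τ n) := by
    intro n
    induction n with
    | zero => intro _; exact win_start
    | succ n ih =>
      intro hn
      have hp := ih (by omega)
      have hlen := playAux_length (wn K) σ τ n
      rw [playAux]
      generalize playAux (wn K) σ τ n = h at *
      have hex := exists_legalMove hG h (by simp; omega)
      have h7 : 7 - h.length = (7 - (h.length + 1)) + 1 := by omega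
      have hfi := first_iff K hK h (by omega)
      simp only [P] at hp
      rw [h7, win] at hp
      simp only [scores_wn K hK h (by omega), div_le_div_iff_of_pos_right ht, Nat.cast_le, ← hfi]
      split_ifs at hp ⊢ with hf
      · rw [List.all_eq_true] at hp
        have h1 := hp (σ h) (List.mem_finRange _)
        have h2 := (legalB_iff h (σ h)).2 (hσ h hex)
        simpa [h2, P, stOf] using h1
      · rw [List.any_eq_true] at hp
        obtain ⟨u, -, hu⟩ := hp
        rw [Bool.and_eq_true] at hu
        exact prefStrategy_spec G 0 P h ⟨u, (legalB_iff h u).1 hu.1, by simpa [P, stOf] using hu.2⟩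
  have hfin := key 7 le_rfl
  have h1 := hc τ hτ
  have hlen := playAux_length (wn K) σ τ 7
  unfold firstScore at h1
  rw [Fintype.card_fin, scores_wn K hK _ hlen.le] at h1
  generalize playAux (wn K) σ τ 7 = h at *
  simp only [P, hlen, Nat.sub_self, win, decide_eq_true_eq] at hfin
  have hb := stOf_le h
  have hnum : (stOf h).a * K + (stOf h).b ≤ K + 42000 := by
    have : (stOf h).a * K ≤ 1 * K := Nat.mul_le_mul_right K hfin
    omega
  have hnum' : (((stOf h).a * K + (stOf h).b : ℕ) : ℝ) ≤ K + 42000 := by exact_mod_cast hnum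
  refine h1.trans ?_
  exact div_le_div₀ (by positivity) hnum' (by positivity) (tot_ge K)

end ConcurrentSharing

open ConcurrentSharing in
/-- The infimum of `v(G,w)` over all instances `(G,w)` of the
concurrent graph sharing game equals `1/3`. -/
theorem inf_gameValue_eq_one_third :
    sInf {r : ℝ | ∃ (n : ℕ) (G : SimpleGraph (Fin n)) (w : Fin n → ℝ),
        IsGameInstance G w ∧ r = gameValue G w} = 1 / 3 := by
  apply le_antisymm
  · apply le_of_forall_pos_le_add
    intro ε hε
    obtain ⟨m, hm⟩ := exists_nat_gt (42000 / ε)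
    set K : ℕ := m + 42001 with hKdef
    have hK : 42000 < K := by omega
    have hKm : (m : ℝ) ≤ K := by exact_mod_cast (by omega : m ≤ K)
    have hK0 : (0 : ℝ) < K := by exact_mod_cast (by omega : 0 < K)
    have hbd : BddBelow {r : ℝ | ∃ (n : ℕ) (G : SimpleGraph (Fin n)) (w : Fin n → ℝ),
        IsGameInstance G w ∧ r = gameValue G w} := by
      refine ⟨1 / 3, ?_⟩
      rintro r ⟨n, G, w, hI, rfl⟩
      exact one_third_le_gameValue hI
    refine (csInf_le hbd ⟨7, _, _, wn_instance K hK, rfl⟩).trans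
      ((gameValue_wn_le K hK).trans ?_)
    · clear_value K
      rw [div_le_iff₀ (by positivity)]
      rw [div_lt_iff₀ hε] at hm
      nlinarith
  · apply le_csInf
    · obtain ⟨K, hK⟩ : ∃ K, 42000 < K := exists_gt 42000
      exact ⟨_, 7, _, _, wn_instance K hK, rfl⟩
    · rintro r ⟨n, G, w, hI, rfl⟩
      exact one_third_le_gameValue hI
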